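/- Let r,q ≥ 1 with rq > 1. For all tags L,L' ∈ {A,B} and indices (j,k), (j',k') with (L,j,k) ≠ (A,0,0) and (L',j',k') ≠ (A,0,0): there is an edge from the label L^j_k to the label L'^{j'}_{k'} in the connection digraph of σ_{rq} (labels via the (r,q)-labeling) if and only if there is an edge from L^k_j to L'^{k'}_{j'} in the connection digraph of σ_{qr} (labels via the (q,r)-labeling, in which the first index ranges over 0,…,q and the second over 0,…,r). In other words, the index-swapping label map Λ is a direction-preserving isomorphism of the two connection digraphs. -/

import Mathlib

/-- Morse numbers `i_j` of a permutation `σ` of `{1,…,N}` (extended to `ℕ`),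
via the recursion `i_1 = 0`,
`i_{j+1} = i_j + (-1)^(j+1) * sign (σ⁻¹(j+1) - σ⁻¹(j))`. -/
def morse (σ : Equiv.Perm ℕ) : ℕ → ℤ
  | 0 => 0
  | 1 => 0
  | (j+2) => morse σ (j+1) +
      (-1)^(j+2) * Int.sign ((σ.symm (j+2) : ℤ) - (σ.symm (j+1) : ℤ))

/-- Zero numbers `z_{j k}`, recursion in the first index `j`, second index `k` fixed:
`z_{1k} = 0`, `z_{kk} = i_k`, `z_{k+1,k} = min (i_k, i_{k+1})`, and otherwise
`z_{j+1,k} = z_{jk} + ((-1)^(j+1)/2) * (sign (σ⁻¹(j+1) - σ⁻¹(k)) - sign (σ⁻¹(j) - σ⁻¹(k)))`. -/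
def zrec (σ : Equiv.Perm ℕ) (k : ℕ) : ℕ → ℤ
  | 0 => 0
  | 1 => 0
  | (j+2) =>
      if j+2 = k then morse σ k
      else if j+1 = k then min (morse σ k) (morse σ (k+1))
      else zrec σ k (j+1) +
        ((-1)^(j+2) * (Int.sign ((σ.symm (j+2) : ℤ) - (σ.symm k : ℤ))
          - Int.sign ((σ.symm (j+1) : ℤ) - (σ.symm k : ℤ)))) / 2

/-- The zero number `z_{m n}`. -/
def zfun (σ : Equiv.Perm ℕ) (m n : ℕ) : ℤ := zrec σ n m

/-- The connection digraph of a dissipative Morse permutation `σ` of `{1,…,N}`: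
an edge `m ⤳ n` iff `i_m = i_n + 1` and no `w` strictly between `m` and `n`
blocks, i.e. satisfies `z_{mw} = z_{wn} = z_{mn}`. -/
def hasEdge (N : ℕ) (σ : Equiv.Perm ℕ) (m n : ℕ) : Prop :=
  1 ≤ m ∧ m ≤ N ∧ 1 ≤ n ∧ n ≤ N ∧
  morse σ m = morse σ n + 1 ∧
  ¬ ∃ w : ℕ, min m n < w ∧ w < max m n ∧
      zfun σ m w = zfun σ w n ∧ zfun σ w n = zfun σ m n

/-- A dissipative permutation of `{1,…,N}`. -/
def Dissipative (N : ℕ) (σ : Equiv.Perm ℕ) : Prop :=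
  Set.BijOn σ (Set.Icc 1 N) (Set.Icc 1 N) ∧ σ 1 = 1 ∧ σ N = N

/-- The Morse property: all Morse numbers are nonnegative. -/
def MorseProp (N : ℕ) (σ : Equiv.Perm ℕ) : Prop :=
  ∀ j, 1 ≤ j → j ≤ N → 0 ≤ morse σ j

/-- Morse counts `μ(i) = #{j ∈ {1,…,N} : i_j = i}`. -/
def morseCount (N : ℕ) (σ : Equiv.Perm ℕ) (i : ℤ) : ℕ :=
  ((Finset.Icc 1 N).filter (fun j => morse σ j = i)).card

/-- The primitive 3-nose permutation `σ_{rq}` of `{1,…,N}`, `N = 2(r+1)(q+1)-1`,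
characterized by its defining relations, extended to a permutation of `ℕ`
fixing everything outside `{1,…,N}`. -/
def SigmaRQ (r q : ℕ) (σ : Equiv.Perm ℕ) : Prop :=
  (∀ a, a ∉ Set.Icc 1 (2*(r+1)*(q+1) - 1) → σ a = a) ∧
  (∀ j k, j ≤ r → k ≤ q →
    σ (2*((q+1)*j+k)+1) = 2*(j+(r+1)*k)+1) ∧
  (∀ j k, j ≤ r → k ≤ q → ¬(j = 0 ∧ k = 0) →
    σ (2*((q+1)*(r-j)+(q-k)+1)) = 2*(j+(r+1)*k))

/-- Tags `A`, `B` of equilibrium labels `A^j_k`, `B^j_k`. -/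
inductive Tag | A | B
deriving DecidableEq

/-- The axis position (`h_1`-position) of the label `L^j_k` for parameters `(r,q)`. -/
def axisPos (r q : ℕ) : Tag → ℕ → ℕ → ℕ
  | Tag.A, j, k => if Odd j then (q+1)*(j-1)+k+1 else (q+1)*(2*r+1-j)+(q-k)+1
  | Tag.B, j, k => if Odd j then (q+1)*j+(q-k)+1 else (q+1)*(2*r-j)+k+1

/-- The meander position (`h_0`-position) of the label `L^j_k` for parameters `(r,q)`. -/
def meanderPos (r q : ℕ) : Tag → ℕ → ℕ → ℕ
  | Tag.A, j, k => if Odd k then (r+1)*(2*q+1-k)+(2*r+1-j) else (r+1)*k+j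
  | Tag.B, j, k => if Odd k then (r+1)*(2*q+1-k)+j else (r+1)*(k+1)+(r-j)

/-- The suspension `σ̃` of a dissipative permutation `σ` of `{1,…,N}`:
`σ̃(1) = 1`, `σ̃(N+2) = N+2`, and `σ̃(a+1) = N+2 - σ(a)` for `1 ≤ a ≤ N`. -/
def IsSuspension (N : ℕ) (σ σt : Equiv.Perm ℕ) : Prop :=
  σt 1 = 1 ∧ σt (N+2) = N+2 ∧ ∀ a, 1 ≤ a → a ≤ N → σt (a+1) = N+2 - σ a

/-- The label `A^0_0` is the distinguished (formal) vertex `⋆`. -/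
def IsStar (L : Tag) (j k : ℕ) : Prop := L = Tag.A ∧ j = 0 ∧ k = 0

/-- Tag swap `A ↔ B`, used by the reversor. -/
def tagSwap : Tag → Tag
  | Tag.A => Tag.B
  | Tag.B => Tag.A


/-- Row key of a label in the meander order. -/
def keyU (q : ℤ) : Tag → ℤ → ℤ
  | Tag.A, k => if k % 2 = 1 then 2*q+2-k else k
  | Tag.B, k => if k % 2 = 1 then 2*q+1-k else k+1

/-- Column key of a label in the meander order. -/
def keyV (r : ℤ) : Tag → ℤ → ℤ → ℤ
  | Tag.A, j, k => if k % 2 = 1 then r-j else j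
  | Tag.B, j, k => if k % 2 = 1 then j else r-j

/-- Lexicographic order of labels along the meander. -/
def lexLt (r q : ℤ) (L : Tag) (j k : ℤ) (M : Tag) (x y : ℤ) : Prop :=
  keyU q L k < keyU q M y ∨ (keyU q L k = keyU q M y ∧ keyV r L j k < keyV r M x y)

/-- Closed form of the Morse numbers. -/
def morI : Tag → ℤ → ℤ → ℤ
  | Tag.A, j, k => j+k-1
  | Tag.B, j, k => j+k

/-- Closed form of the zero numbers. -/
def zZ : Tag → ℤ → ℤ → Tag → ℤ → ℤ → ℤ
  | Tag.A, j, k, Tag.A, x, y =>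
      if (j < x ∧ y < k) ∨ (x < j ∧ k < y) then min j x + min k y else min j x + min k y - 1
  | Tag.A, j, k, Tag.B, x, y => min j (x+1) + min k (y+1) - 1
  | Tag.B, j, k, Tag.A, x, y => min x (j+1) + min y (k+1) - 1
  | Tag.B, j, k, Tag.B, x, y =>
      if (j < x ∧ k < y) ∨ (x < j ∧ y < k) then min j x + min k y + 1 else min j x + min k y

lemma keyV_bd (r : ℤ) (L : Tag) (j k : ℤ) (h0 : 0 ≤ j) (h1 : j ≤ r) :
    0 ≤ keyV r L j k ∧ keyV r L j k ≤ r := by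
  cases L <;> simp only [keyV] <;> split_ifs <;> omega

lemma lex_arith (r U V U' V' : ℤ) (h0 : 0 ≤ V) (h1 : V ≤ r) (h2 : 0 ≤ V') (h3 : V' ≤ r) :
    (r+1)*U+V < (r+1)*U'+V' ↔ (U < U' ∨ (U = U' ∧ V < V')) := by
  constructor
  · intro h
    rcases lt_trichotomy U U' with h' | h' | h'
    · exact Or.inl h'
    · subst h'; right; exact ⟨rfl, by linarith⟩
    · exfalso; nlinarith
  · rintro (h | ⟨rfl, h⟩)
    · nlinarith
    · linarith

lemma meander_cast (r q : ℕ) (L : Tag) (j k : ℕ) (hj : j ≤ r) (hk : k ≤ q) :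
    (meanderPos r q L j k : ℤ) = ((r:ℤ)+1) * keyU q L k + keyV r L j k := by
  cases L <;> simp only [meanderPos, keyU, keyV]
  · rcases Nat.even_or_odd k with h | h
    · rw [if_neg (by simpa using h), if_neg (by obtain ⟨a, rfl⟩ := h; omega), if_neg (by obtain ⟨a, rfl⟩ := h; omega)]
      push_cast; ring
    · rw [if_pos h, if_pos (by obtain ⟨a, rfl⟩ := h; omega), if_pos (by obtain ⟨a, rfl⟩ := h; omega)]
      rw [Nat.cast_add, Nat.cast_mul, Nat.cast_sub (by omega), Nat.cast_sub (by omega)]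
      push_cast; ring
  · rcases Nat.even_or_odd k with h | h
    · rw [if_neg (by simpa using h), if_neg (by obtain ⟨a, rfl⟩ := h; omega), if_neg (by obtain ⟨a, rfl⟩ := h; omega)]
      rw [Nat.cast_add, Nat.cast_mul, Nat.cast_sub (by omega)]
      push_cast; ring
    · rw [if_pos h, if_pos (by obtain ⟨a, rfl⟩ := h; omega), if_pos (by obtain ⟨a, rfl⟩ := h; omega)]
      rw [Nat.cast_add, Nat.cast_mul, Nat.cast_sub (by omega)]
      push_cast; ring

lemma axis_meander (r q : ℕ) (L : Tag) (j k : ℕ) (hj : j ≤ r) (hk : k ≤ q) :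
    (axisPos r q L j k : ℤ) = 2*((r:ℤ)+1)*(q+1) - meanderPos q r L k j := by
  have e1 : j ≤ 2*r+1 := by omega
  have e2 : j ≤ 2*r := by omega
  have e3 : k ≤ 2*q+1 := by omega
  cases L <;> simp only [meanderPos, axisPos] <;> rcases Nat.even_or_odd j with h | h
  · rw [if_neg (by simpa using h), if_neg (by simpa using h)]
    simp only [Nat.cast_add, Nat.cast_mul, Nat.cast_sub hk, Nat.cast_sub e1]
    push_cast; ring
  · rw [if_pos h, if_pos h]
    simp only [Nat.cast_add, Nat.cast_mul, Nat.cast_sub h.pos, Nat.cast_sub e1, Nat.cast_sub e3]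
    push_cast; ring
  · rw [if_neg (by simpa using h), if_neg (by simpa using h)]
    simp only [Nat.cast_add, Nat.cast_mul, Nat.cast_sub hk, Nat.cast_sub e2]
    push_cast; ring
  · rw [if_pos h, if_pos h]
    simp only [Nat.cast_add, Nat.cast_mul, Nat.cast_sub hk, Nat.cast_sub e1]
    push_cast; ring

lemma meander_lt (r q : ℕ) (L M : Tag) (j k x y : ℕ) (hj : j ≤ r) (hk : k ≤ q)
    (hx : x ≤ r) (hy : y ≤ q) :
    meanderPos r q L j k < meanderPos r q M x y ↔ lexLt r q L j k M x y := by
  zify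
  rw [meander_cast r q L j k hj hk, meander_cast r q M x y hx hy]
  have h1 := keyV_bd r L j k (by omega) (by omega)
  have h2 := keyV_bd r M x y (by omega) (by omega)
  exact lex_arith _ _ _ _ _ h1.1 h1.2 h2.1 h2.2

lemma axis_lt (r q : ℕ) (L M : Tag) (j k x y : ℕ) (hj : j ≤ r) (hk : k ≤ q)
    (hx : x ≤ r) (hy : y ≤ q) :
    axisPos r q L j k < axisPos r q M x y ↔ lexLt q r M y x L k j := by
  rw [← meander_lt q r M L y x k j hy hx hk hj]
  zify
  rw [axis_meander r q L j k hj hk, axis_meander r q M x y hx hy]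
  constructor <;> intro h <;> linarith

lemma lex_total (r q : ℤ) (L M : Tag) (j k x y : ℤ) (hj0 : 0 ≤ j) (hj : j ≤ r)
    (hk0 : 0 ≤ k) (hk : k ≤ q) (hx0 : 0 ≤ x) (hx : x ≤ r) (hy0 : 0 ≤ y) (hy : y ≤ q)
    (h1 : ¬ lexLt r q L j k M x y) (h2 : ¬ lexLt r q M x y L j k) : L = M ∧ j = x ∧ k = y := by
  unfold lexLt at h1 h2
  cases L <;> cases M <;> simp only [keyU, keyV] at h1 h2 <;> split_ifs at h1 h2 <;>
    first | (exfalso; omega) | (refine ⟨rfl, ?_, ?_⟩ <;> omega)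

lemma meander_inj (r q : ℕ) (L M : Tag) (j k x y : ℕ) (hj : j ≤ r) (hk : k ≤ q)
    (hx : x ≤ r) (hy : y ≤ q) (h : meanderPos r q L j k = meanderPos r q M x y) :
    L = M ∧ j = x ∧ k = y := by
  have h1 := meander_lt r q L M j k x y hj hk hx hy
  have h2 := meander_lt r q M L x y j k hx hy hj hk
  have := lex_total r q L M j k x y (by omega) (by omega) (by omega) (by omega) (by omega)
    (by omega) (by omega) (by omega) (by rw [← h1]; omega) (by rw [← h2]; omega)
  refine ⟨this.1, ?_, ?_⟩ <;> omega

lemma meander_surj (r q : ℕ) (w : ℕ) (hw : w < 2*(r+1)*(q+1)) :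
    ∃ L j k, j ≤ r ∧ k ≤ q ∧ meanderPos r q L j k = w := by
  obtain ⟨U, V, hV, rfl⟩ : ∃ U V, V ≤ r ∧ (r+1)*U+V = w :=
    ⟨w / (r+1), w % (r+1), Nat.lt_succ_iff.mp (Nat.mod_lt _ (by omega)), Nat.div_add_mod _ _⟩
  have hU : U < 2*(q+1) := by
    by_contra hc
    push Not at hc
    have := Nat.mul_le_mul_left (r+1) hc
    nlinarith
  rcases Nat.even_or_odd U with h | h
  · by_cases hq : U ≤ q
    · refine ⟨Tag.A, V, U, hV, hq, ?_⟩
      simp only [meanderPos]; rw [if_neg (by simpa using h)]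
    · refine ⟨Tag.B, V, 2*q+1-U, hV, by omega, ?_⟩
      simp only [meanderPos]
      rw [if_pos (by obtain ⟨a, rfl⟩ := h; exact ⟨q-a, by omega⟩), Nat.sub_sub_self (by omega)]
  · by_cases hq : U ≤ q+1
    · refine ⟨Tag.B, r-V, U-1, by omega, by omega, ?_⟩
      simp only [meanderPos]
      have := h.pos
      rw [if_neg (by obtain ⟨a, rfl⟩ := h; simp), Nat.sub_add_cancel h.pos, Nat.sub_sub_self hV]
    · refine ⟨Tag.A, r-V, 2*q+2-U, by omega, by omega, ?_⟩
      simp only [meanderPos]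
      rw [if_pos (by obtain ⟨a, rfl⟩ := h; exact ⟨q-a, by omega⟩)]
      have h1 : 2*q+1-(2*q+2-U) = U-1 := by omega
      have h2 : 2*r+1-(r-V) = r+1+V := by omega
      obtain ⟨a, rfl⟩ := h
      rw [h1, h2]; simp; ring

lemma sigma_axis (r q : ℕ) (σ : Equiv.Perm ℕ) (hσ : SigmaRQ r q σ) (L : Tag) (j k : ℕ)
    (hj : j ≤ r) (hk : k ≤ q) (hs : ¬ (L = Tag.A ∧ j = 0 ∧ k = 0)) :
    σ (axisPos r q L j k) = meanderPos r q L j k := by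
  obtain ⟨-, h1, h2⟩ := hσ
  have H1 : ∀ a b m n : ℕ, a ≤ r → b ≤ q → m = 2*((q+1)*a+b)+1 → n = 2*(a+(r+1)*b)+1 → σ m = n := by
    rintro a b m n ha hb rfl rfl; exact h1 a b ha hb
  have H2 : ∀ a b m n : ℕ, a ≤ r → b ≤ q → ¬(a = 0 ∧ b = 0) →
      (m:ℤ) = 2*((q+1)*(r-a)+(q-b)+1) → n = 2*(a+(r+1)*b) → σ m = n := by
    rintro a b m n ha hb hab hm rfl
    have : m = 2*((q+1)*(r-a)+(q-b)+1) := by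
      zify
      rw [hm, Nat.cast_sub ha, Nat.cast_sub hb]
    rw [this]; exact h2 a b ha hb hab
  have H3 : ∀ a b m n : ℕ, a ≤ r → b ≤ q →
      (m:ℤ) = 2*((q+1)*a+b)+1 → (n:ℤ) = 2*(a+(r+1)*b)+1 → σ m = n := by
    rintro a b m n ha hb hm hn
    exact H1 a b m n ha hb (by exact_mod_cast hm) (by exact_mod_cast hn)
  have H4 : ∀ a b m n : ℕ, a ≤ r → b ≤ q → ¬(a = 0 ∧ b = 0) →
      (m:ℤ) = 2*((q+1)*(r-a)+(q-b)+1) → (n:ℤ) = 2*(a+(r+1)*b) → σ m = n := by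
    rintro a b m n ha hb hab hm hn
    exact H2 a b m n ha hb hab hm (by exact_mod_cast hn)
  have ha := axis_meander r q L j k hj hk
  rw [meander_cast q r L k j hk hj] at ha
  have hm := meander_cast r q L j k hj hk
  rcases Nat.even_or_odd' j with ⟨a, rfl | rfl⟩ <;> rcases Nat.even_or_odd' k with ⟨b, rfl | rfl⟩ <;>
    cases L <;> simp only [keyU, keyV] at ha hm
  all_goals (push_cast at ha hm)
  all_goals (try rw [if_pos (by omega)] at ha)
  all_goals (try rw [if_pos (by omega)] at hm)
  all_goals (try rw [if_pos (by omega)] at ha)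
  all_goals (try rw [if_pos (by omega)] at hm)
  all_goals (try rw [if_neg (by omega)] at ha)
  all_goals (try rw [if_neg (by omega)] at hm)
  all_goals (try rw [if_neg (by omega)] at ha)
  all_goals (try rw [if_neg (by omega)] at hm)
  -- even even A
  · exact H4 a b _ _ (by omega) (by omega) (by simp at hs; omega) (by rw [ha]; ring) (by rw [hm]; ring)
  -- even even B
  · exact H3 (r-a) b _ _ (by omega) (by omega) (by rw [ha, Nat.cast_sub (by omega)]; ring)
      (by rw [hm, Nat.cast_sub (by omega)]; ring)
  · exact H3 (r-a) (q-b) _ _ (by omega) (by omega)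
      (by rw [ha, Nat.cast_sub (by omega), Nat.cast_sub (by omega)]; ring)
      (by rw [hm, Nat.cast_sub (by omega), Nat.cast_sub (by omega)]; ring)
  · exact H4 a (q-b) _ _ (by omega) (by omega) (by omega)
      (by rw [ha, Nat.cast_sub (by omega)]; ring)
      (by rw [hm, Nat.cast_sub (by omega)]; ring)
  · exact H3 a b _ _ (by omega) (by omega) (by rw [ha]; ring) (by rw [hm]; ring)
  · exact H4 (r-a) b _ _ (by omega) (by omega) (by omega)
      (by rw [ha, Nat.cast_sub (by omega)]; ring) (by rw [hm, Nat.cast_sub (by omega)]; ring)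
  · exact H4 (r-a) (q-b) _ _ (by omega) (by omega) (by omega)
      (by rw [ha, Nat.cast_sub (by omega), Nat.cast_sub (by omega)]; ring)
      (by rw [hm, Nat.cast_sub (by omega), Nat.cast_sub (by omega)]; ring)
  · exact H3 a (q-b) _ _ (by omega) (by omega)
      (by rw [ha, Nat.cast_sub (by omega)]; ring)
      (by rw [hm, Nat.cast_sub (by omega)]; ring)

/-- Consecutive labels along the meander. -/
def stepP (r q : ℤ) (L : Tag) (j k : ℤ) (L' : Tag) (j' k' : ℤ) : Prop :=
  (L = Tag.A ∧ L' = Tag.A ∧ k % 2 = 0 ∧ j' = j+1 ∧ k' = k) ∨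
  (L = Tag.B ∧ L' = Tag.B ∧ k % 2 = 0 ∧ j' = j-1 ∧ k' = k) ∨
  (L = Tag.A ∧ L' = Tag.B ∧ k % 2 = 0 ∧ j = r ∧ j' = r ∧ k' = k) ∨
  (L = Tag.B ∧ L' = Tag.A ∧ k % 2 = 0 ∧ j = 0 ∧ j' = 0 ∧ k' = k+2) ∨
  (L = Tag.B ∧ L' = Tag.B ∧ k % 2 = 1 ∧ j' = j+1 ∧ k' = k) ∨
  (L = Tag.A ∧ L' = Tag.A ∧ k % 2 = 1 ∧ j' = j-1 ∧ k' = k) ∨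
  (L = Tag.B ∧ L' = Tag.A ∧ k % 2 = 1 ∧ j = r ∧ j' = r ∧ k' = k) ∨
  (L = Tag.A ∧ L' = Tag.B ∧ k % 2 = 1 ∧ j = 0 ∧ j' = 0 ∧ k' = k-2) ∨
  (L = Tag.B ∧ L' = Tag.B ∧ k % 2 = 0 ∧ j = 0 ∧ j' = 0 ∧ k = q ∧ k' = q-1) ∨
  (L = Tag.B ∧ L' = Tag.B ∧ k % 2 = 0 ∧ j = 0 ∧ j' = 0 ∧ k = q-1 ∧ k' = q)

lemma succ_arith (r U V U' V' : ℤ) (h0 : 0 ≤ V) (h1 : V ≤ r) (h2 : 0 ≤ V') (h3 : V' ≤ r)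
    (h : (r+1)*U'+V' = (r+1)*U+V+1) :
    (U' = U ∧ V' = V+1) ∨ (U' = U+1 ∧ V = r ∧ V' = 0) := by
  rcases lt_trichotomy U' U with h' | h' | h'
  · exfalso; nlinarith
  · subst h'; left; exact ⟨rfl, by linarith⟩
  · right
    have : U' = U+1 := by
      by_contra hc
      have : U + 2 ≤ U' := by omega
      nlinarith
    subst this
    refine ⟨rfl, ?_, ?_⟩ <;> nlinarith

set_option maxHeartbeats 2000000 in
lemma step_of_keys (r q : ℤ) (L L' : Tag) (j k j' k' : ℤ) (hj0 : 0 ≤ j) (hj : j ≤ r)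
    (hk0 : 0 ≤ k) (hk : k ≤ q) (hj0' : 0 ≤ j') (hj' : j' ≤ r) (hk0' : 0 ≤ k') (hk' : k' ≤ q)
    (h : (keyU q L' k' = keyU q L k ∧ keyV r L' j' k' = keyV r L j k + 1) ∨
      (keyU q L' k' = keyU q L k + 1 ∧ keyV r L j k = r ∧ keyV r L' j' k' = 0)) :
    stepP r q L j k L' j' k' := by
  unfold stepP
  cases L <;> cases L' <;> simp only [keyU, keyV] at h <;> split_ifs at h <;> simp <;> omega

lemma step_of_meander (r q : ℕ) (L L' : Tag) (j k j' k' : ℕ) (hj : j ≤ r) (hk : k ≤ q)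
    (hj' : j' ≤ r) (hk' : k' ≤ q) (h : meanderPos r q L' j' k' = meanderPos r q L j k + 1) :
    stepP r q L j k L' j' k' := by
  zify at h
  rw [meander_cast r q L j k hj hk, meander_cast r q L' j' k' hj' hk'] at h
  have h1 := keyV_bd r L j k (by omega) (by omega)
  have h2 := keyV_bd r L' j' k' (by omega) (by omega)
  exact step_of_keys r q L L' j k j' k' (by omega) (by omega) (by omega) (by omega) (by omega)
    (by omega) (by omega) (by omega) (succ_arith r _ _ _ _ h1.1 h1.2 h2.1 h2.2 h)

lemma meander_parity (r q : ℕ) (L : Tag) (j k : ℕ) (hj : j ≤ r) (hk : k ≤ q) :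
    (meanderPos r q L j k : ℤ) % 2 = (morI L j k + 1) % 2 := by
  rw [meander_cast r q L j k hj hk]
  have key : ∀ U V : ℤ, U % 2 = 0 → (((r:ℤ)+1)*U + V) % 2 = V % 2 := by
    intro U V hU
    obtain ⟨c, rfl⟩ : ∃ c, U = 2*c := ⟨U/2, by omega⟩
    rw [show ((r:ℤ)+1)*(2*c) + V = 2*((r+1)*c) + V by ring]; omega
  have key' : ∀ U V : ℤ, U % 2 = 1 → (((r:ℤ)+1)*U + V) % 2 = (r+1+V) % 2 := by
    intro U V hU
    obtain ⟨c, rfl⟩ : ∃ c, U = 2*c+1 := ⟨U/2, by omega⟩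
    rw [show ((r:ℤ)+1)*(2*c+1) + V = 2*((r+1)*c) + (r+1+V) by ring]; omega
  cases L <;> simp only [keyU, keyV, morI] <;> split_ifs <;>
    first | (rw [key _ _ (by omega)]; omega) | (rw [key' _ _ (by omega)]; omega)


lemma mor_step (r q : ℤ) (L L' : Tag) (j k j' k' e : ℤ) (hj0 : 0 ≤ j) (hj : j ≤ r)
    (hk0 : 0 ≤ k) (hk : k ≤ q) (hj0' : 0 ≤ j') (hj' : j' ≤ r) (hk0' : 0 ≤ k') (hk' : k' ≤ q)
    (hr : 1 ≤ r)
    (he : (morI L' j' k' % 2 = 0 ∧ e = -1) ∨ (morI L' j' k' % 2 = 1 ∧ e = 1))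
    (h : stepP r q L j k L' j' k') :
    zZ L' j' k' L j k = min (morI L j k) (morI L' j' k') ∧
    ((lexLt q r L' k' j' L k j ∧ morI L' j' k' = morI L j k + e)
    ∨ (lexLt q r L k j L' k' j' ∧ morI L' j' k' = morI L j k - e)) := by
  unfold lexLt
  rcases h with h | h | h | h | h | h | h | h | h | h <;>
  obtain ⟨rfl, rfl, h⟩ := h <;> simp only [zZ, morI, keyU, keyV] at he ⊢ <;>
    constructor <;> (try split_ifs) <;> omega

set_option maxHeartbeats 4000000 in
lemma z_step (r q : ℤ) (L L' M : Tag) (j k j' k' x y e : ℤ) (hj0 : 0 ≤ j) (hj : j ≤ r)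
    (hk0 : 0 ≤ k) (hk : k ≤ q) (hj0' : 0 ≤ j') (hj' : j' ≤ r) (hk0' : 0 ≤ k') (hk' : k' ≤ q)
    (hx0 : 0 ≤ x) (hx : x ≤ r) (hy0 : 0 ≤ y) (hy : y ≤ q) (hr : 1 ≤ r) (hq : 1 ≤ q)
    (hs : ¬ (M = Tag.A ∧ x = 0 ∧ y = 0))
    (he : (morI L' j' k' % 2 = 0 ∧ e = -1) ∨ (morI L' j' k' % 2 = 1 ∧ e = 1))
    (h : stepP r q L j k L' j' k') :
    (lexLt q r L k j M y x → lexLt q r L' k' j' M y x → zZ L' j' k' M x y = zZ L j k M x y) ∧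
    (lexLt q r M y x L k j → lexLt q r M y x L' k' j' → zZ L' j' k' M x y = zZ L j k M x y) ∧
    (lexLt q r L k j M y x → lexLt q r M y x L' k' j' →
      zZ L' j' k' M x y = zZ L j k M x y - e) ∧
    (lexLt q r M y x L k j → lexLt q r L' k' j' M y x →
      zZ L' j' k' M x y = zZ L j k M x y + e) := by
  unfold lexLt
  rcases Int.emod_two_eq_zero_or_one j with hj2 | hj2 <;>
  rcases Int.emod_two_eq_zero_or_one x with hx2 | hx2 <;>
  rcases Int.emod_two_eq_zero_or_one j' with hj3 | hj3 <;>
  rcases h with h | h | h | h | h | h | h | h | h | h <;>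
  obtain ⟨rfl, rfl, h⟩ := h <;> first | (exfalso; omega) | cases M <;>
    simp only [zZ, morI, keyU, keyV, true_and, false_and, reduceCtorEq, not_false_eq_true,
      hj2, hx2, hj3, if_true, if_false, zero_ne_one] at hs he ⊢ <;>
    refine ⟨fun h1 h2 => ?_, fun h1 h2 => ?_, fun h1 h2 => ?_, fun h1 h2 => ?_⟩ <;> grind

/-- The explicit list of edges. -/
def edgeL : Tag → ℤ → ℤ → Tag → ℤ → ℤ → Prop
  | Tag.B, j, k, Tag.A, x, y => x = j ∧ y = k
  | Tag.A, j, k, Tag.B, x, y => (x = j-2 ∧ y = k) ∨ (x = j ∧ y = k-2)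
  | Tag.A, j, k, Tag.A, x, y => (x = j-1 ∧ y = k) ∨ (x = j ∧ y = k-1)
  | Tag.B, j, k, Tag.B, x, y => (x = j-1 ∧ y = k) ∨ (x = j ∧ y = k-1)

lemma edgeL_swap (L M : Tag) (j k x y : ℤ) : edgeL L j k M x y ↔ edgeL L k j M y x := by
  cases L <;> cases M <;> simp only [edgeL] <;> tauto

lemma edgeL_mor (L M : Tag) (j k x y : ℤ) (h : edgeL L j k M x y) :
    morI L j k = morI M x y + 1 := by
  cases L <;> cases M <;> simp only [edgeL, morI] at h ⊢ <;> omega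

set_option maxHeartbeats 4000000 in
lemma edge_unblocked (r q : ℤ) (L M C : Tag) (j k x y u v : ℤ) (hj0 : 0 ≤ j) (hj : j ≤ r)
    (hk0 : 0 ≤ k) (hk : k ≤ q) (hx0 : 0 ≤ x) (hx : x ≤ r) (hy0 : 0 ≤ y) (hy : y ≤ q)
    (hu0 : 0 ≤ u) (hu : u ≤ r) (hv0 : 0 ≤ v) (hv : v ≤ q)
    (h : edgeL L j k M x y)
    (hb : (lexLt r q L j k C u v ∧ lexLt r q C u v M x y) ∨
      (lexLt r q M x y C u v ∧ lexLt r q C u v L j k))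
    (h1 : zZ L j k C u v = zZ C u v M x y) (h2 : zZ C u v M x y = zZ L j k M x y) : False := by
  unfold lexLt at hb
  rcases Int.emod_two_eq_zero_or_one k with hk2 | hk2 <;>
  rcases Int.emod_two_eq_zero_or_one v with hv2 | hv2 <;>
  rcases Int.emod_two_eq_zero_or_one y with hy2 | hy2 <;>
  cases L <;> cases M <;> simp only [edgeL] at h <;> first | (exfalso; omega) | cases C <;>
    simp only [zZ, keyU, keyV, hk2, hv2, hy2, if_true, if_false, zero_ne_one] at hb h1 h2 <;>
    rcases hb with ⟨hb, hc⟩ | ⟨hb, hc⟩ <;> grind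

set_option maxHeartbeats 4000000 in
lemma nonedge_blocked (r q : ℤ) (L M : Tag) (j k x y : ℤ) (hj0 : 0 ≤ j) (hj : j ≤ r)
    (hk0 : 0 ≤ k) (hk : k ≤ q) (hx0 : 0 ≤ x) (hx : x ≤ r) (hy0 : 0 ≤ y) (hy : y ≤ q)
    (hm : morI L j k = morI M x y + 1)
    (h : ¬ edgeL L j k M x y) :
    ∃ u v, 0 ≤ u ∧ u ≤ r ∧ 0 ≤ v ∧ v ≤ q ∧
    ((lexLt r q L j k Tag.B u v ∧ lexLt r q Tag.B u v M x y) ∨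
      (lexLt r q M x y Tag.B u v ∧ lexLt r q Tag.B u v L j k)) ∧
    zZ L j k Tag.B u v = zZ Tag.B u v M x y ∧ zZ Tag.B u v M x y = zZ L j k M x y := by
  have H : ∀ u v, 0 ≤ u → u ≤ r → 0 ≤ v → v ≤ q →
    ((lexLt r q L j k Tag.B u v ∧ lexLt r q Tag.B u v M x y) ∨
      (lexLt r q M x y Tag.B u v ∧ lexLt r q Tag.B u v L j k)) →
    zZ L j k Tag.B u v = zZ Tag.B u v M x y → zZ Tag.B u v M x y = zZ L j k M x y →
    ∃ u v, 0 ≤ u ∧ u ≤ r ∧ 0 ≤ v ∧ v ≤ q ∧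
    ((lexLt r q L j k Tag.B u v ∧ lexLt r q Tag.B u v M x y) ∨
      (lexLt r q M x y Tag.B u v ∧ lexLt r q Tag.B u v L j k)) ∧
    zZ L j k Tag.B u v = zZ Tag.B u v M x y ∧ zZ Tag.B u v M x y = zZ L j k M x y :=
    fun u v a1 a2 a3 a4 a5 a6 a7 => ⟨u, v, a1, a2, a3, a4, a5, a6, a7⟩
  rcases lt_trichotomy x j with hxj | hxj | hxj
  · by_cases hB : L = Tag.A ∧ M = Tag.B ∧ x = j-1 ∧ y = k-1
    · obtain ⟨rfl, rfl, rfl, rfl⟩ := hB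
      apply H j k hj0 hj hk0 hk <;> clear H <;>
      simp only [lexLt, zZ, keyU, keyV] <;> grind
    · apply H x k hx0 hx hk0 hk <;> clear H <;> (try unfold lexLt) <;>
      rcases Int.emod_two_eq_zero_or_one k with hk2 | hk2 <;>
      rcases Int.emod_two_eq_zero_or_one y with hy2 | hy2 <;>
      cases L <;> cases M <;>
      simp only [morI, edgeL, zZ, keyU, keyV, hk2, hy2, if_true, if_false, zero_ne_one, true_and, false_and, reduceCtorEq, not_false_eq_true] at hm h hB ⊢ <;> grind
  · exfalso; subst hxj
    cases L <;> cases M <;> simp only [morI, edgeL] at hm h <;> grind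
  · apply H j y hj0 hj hy0 hy <;> clear H <;> (try unfold lexLt) <;>
      rcases Int.emod_two_eq_zero_or_one k with hk2 | hk2 <;>
      rcases Int.emod_two_eq_zero_or_one y with hy2 | hy2 <;>
      cases L <;> cases M <;>
      simp only [morI, edgeL, zZ, keyU, keyV, hk2, hy2, if_true, if_false, zero_ne_one] at hm h ⊢ <;> grind

lemma meander_star (r q : ℕ) : meanderPos r q Tag.A 0 0 = 0 := by
  simp [meanderPos]

lemma meander_ne_zero (r q : ℕ) (L : Tag) (j k : ℕ) (hj : j ≤ r) (hk : k ≤ q)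
    (hs : ¬ (L = Tag.A ∧ j = 0 ∧ k = 0)) : meanderPos r q L j k ≠ 0 := by
  intro h
  exact hs (meander_inj r q L Tag.A j k 0 0 hj hk (by omega) (by omega) (by rw [h, meander_star]))

lemma meander_bound (r q : ℕ) (L : Tag) (j k : ℕ) (hj : j ≤ r) (hk : k ≤ q) :
    meanderPos r q L j k < 2*(r+1)*(q+1) := by
  zify
  rw [meander_cast r q L j k hj hk]
  have h1 := keyV_bd r L j k (by omega) (by omega)
  have h2 : keyU q L k ≤ 2*q+1 := by
    cases L <;> simp only [keyU] <;> split_ifs <;> omega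
  have h3 : ((r:ℤ)+1) * keyU q L k ≤ (r+1) * (2*q+1) := by gcongr
  nlinarith

lemma symm_meander (r q : ℕ) (σ : Equiv.Perm ℕ) (hσ : SigmaRQ r q σ) (L : Tag) (j k : ℕ)
    (hj : j ≤ r) (hk : k ≤ q) (hs : ¬ (L = Tag.A ∧ j = 0 ∧ k = 0)) :
    σ.symm (meanderPos r q L j k) = axisPos r q L j k := by
  rw [← sigma_axis r q σ hσ L j k hj hk hs, Equiv.symm_apply_apply]

lemma pow_sign (r q : ℕ) (L : Tag) (j k : ℕ) (hj : j ≤ r) (hk : k ≤ q) :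
    (morI L j k % 2 = 0 ∧ (-1:ℤ)^(meanderPos r q L j k) = -1) ∨
    (morI L j k % 2 = 1 ∧ (-1:ℤ)^(meanderPos r q L j k) = 1) := by
  have h := meander_parity r q L j k hj hk
  rcases Nat.even_or_odd (meanderPos r q L j k) with h' | h'
  · right
    refine ⟨?_, h'.neg_one_pow⟩
    obtain ⟨c, hc⟩ := h'
    rw [hc] at h; push_cast at h; omega
  · left
    refine ⟨?_, h'.neg_one_pow⟩
    obtain ⟨c, hc⟩ := h'
    rw [hc] at h; push_cast at h; omega

lemma exists_pred (r q : ℕ) (L : Tag) (j k m : ℕ) (hj : j ≤ r) (hk : k ≤ q)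
    (h : meanderPos r q L j k = m+2) :
    ∃ L0 j0 k0, j0 ≤ r ∧ k0 ≤ q ∧ ¬ (L0 = Tag.A ∧ j0 = 0 ∧ k0 = 0) ∧
      meanderPos r q L0 j0 k0 = m+1 := by
  have := meander_bound r q L j k hj hk
  obtain ⟨L0, j0, k0, h1, h2, h3⟩ := meander_surj r q (m+1) (by omega)
  refine ⟨L0, j0, k0, h1, h2, ?_, h3⟩
  rintro ⟨rfl, rfl, rfl⟩
  rw [meander_star] at h3; omega

lemma sign_lt {a b : ℕ} (h : a < b) : Int.sign ((a:ℤ) - b) = -1 :=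
  Int.sign_eq_neg_one_of_neg (by omega)

lemma sign_gt {a b : ℕ} (h : b < a) : Int.sign ((a:ℤ) - b) = 1 :=
  Int.sign_eq_one_of_pos (by omega)

lemma meander_one (r q : ℕ) (L : Tag) (j k : ℕ) (hr : 1 ≤ r) (hj : j ≤ r) (hk : k ≤ q)
    (h : meanderPos r q L j k = 1) : L = Tag.A ∧ j = 1 ∧ k = 0 :=
  meander_inj r q L Tag.A j k 1 0 hj hk hr (by omega) (by rw [h]; simp [meanderPos])

lemma morse_eq (r q : ℕ) (hr : 1 ≤ r) (σ : Equiv.Perm ℕ) (hσ : SigmaRQ r q σ) :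
    ∀ (m : ℕ) (L : Tag) (j k : ℕ), j ≤ r → k ≤ q → ¬ (L = Tag.A ∧ j = 0 ∧ k = 0) →
      meanderPos r q L j k = m → morse σ m = morI L j k := by
  intro m
  induction m using Nat.strong_induction_on with
  | _ m ih =>
  intro L j k hj hk hs hm
  match m, ih, hm with
  | 0, _, hm => exact absurd hm (meander_ne_zero r q L j k hj hk hs)
  | 1, _, hm =>
    obtain ⟨rfl, rfl, rfl⟩ := meander_one r q L j k hr hj hk hm
    simp [morse, morI]
  | m+2, ih, hm =>
    obtain ⟨L0, j0, k0, hj0, hk0, hs0, hm0⟩ := exists_pred r q L j k m hj hk hm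
    have hst := step_of_meander r q L0 L j0 k0 j k hj0 hk0 hj hk (by omega)
    have hp := pow_sign r q L j k hj hk
    have h := (mor_step r q L0 L j0 k0 j k _ (by omega) (by omega) (by omega) (by omega)
      (by omega) (by omega) (by omega) (by omega) (by omega) hp hst).2
    rw [morse, ih (m+1) (by omega) L0 j0 k0 hj0 hk0 hs0 hm0, ← hm, ← hm0,
      symm_meander r q σ hσ L j k hj hk hs, symm_meander r q σ hσ L0 j0 k0 hj0 hk0 hs0]
    rw [← axis_lt r q L0 L j0 k0 j k hj0 hk0 hj hk, ← axis_lt r q L L0 j k j0 k0 hj hk hj0 hk0] at h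
    rcases h with ⟨h, h'⟩ | ⟨h, h'⟩
    · rw [sign_gt h, h']; ring
    · rw [sign_lt h, h']; ring

lemma zZ_self (L : Tag) (j k : ℤ) : zZ L j k L j k = morI L j k := by
  cases L <;> simp [zZ, morI]

lemma zZ_one (M : Tag) (x y : ℤ) (hx : 0 ≤ x) (hy : 0 ≤ y)
    (hs : ¬ (M = Tag.A ∧ x = 0 ∧ y = 0)) : zZ Tag.A 1 0 M x y = 0 := by
  cases M <;> simp only [zZ, true_and] at hs ⊢ <;> grind

lemma axis_tri (r q : ℕ) (L M : Tag) (j k x y : ℕ) (hj : j ≤ r) (hk : k ≤ q)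
    (hx : x ≤ r) (hy : y ≤ q) (hne : ¬ (L = M ∧ j = x ∧ k = y)) :
    axisPos r q L j k < axisPos r q M x y ∨ axisPos r q M x y < axisPos r q L j k := by
  by_contra hc
  push Not at hc
  apply hne
  have h1 := axis_lt r q L M j k x y hj hk hx hy
  have h2 := axis_lt r q M L x y j k hx hy hj hk
  have := lex_total q r L M k j y x (by omega) (by omega) (by omega) (by omega) (by omega)
    (by omega) (by omega) (by omega) (by rw [← h2]; omega) (by rw [← h1]; omega)
  refine ⟨this.1, ?_, ?_⟩ <;> omega

lemma zrec_eq (r q : ℕ) (hr : 1 ≤ r) (hq : 1 ≤ q) (σ : Equiv.Perm ℕ) (hσ : SigmaRQ r q σ)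
    (M : Tag) (x y : ℕ) (hx : x ≤ r) (hy : y ≤ q) (hsM : ¬ (M = Tag.A ∧ x = 0 ∧ y = 0)) :
    ∀ (m : ℕ) (L : Tag) (j k : ℕ), j ≤ r → k ≤ q → ¬ (L = Tag.A ∧ j = 0 ∧ k = 0) →
      meanderPos r q L j k = m → zrec σ (meanderPos r q M x y) m = zZ L j k M x y := by
  intro m
  induction m using Nat.strong_induction_on with
  | _ m ih =>
  intro L j k hj hk hs hm
  match m, ih, hm with
  | 0, _, hm => exact absurd hm (meander_ne_zero r q L j k hj hk hs)
  | 1, _, hm =>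
    obtain ⟨rfl, rfl, rfl⟩ := meander_one r q L j k hr hj hk hm
    rw [zrec]
    exact (zZ_one M x y (by omega) (by omega) (by simpa using hsM)).symm
  | m+2, ih, hm =>
    obtain ⟨L0, j0, k0, hj0, hk0, hs0, hm0⟩ := exists_pred r q L j k m hj hk hm
    have hst := step_of_meander r q L0 L j0 k0 j k hj0 hk0 hj hk (by omega)
    have hp := pow_sign r q L j k hj hk
    rw [zrec]
    split_ifs with c1 c2
    · obtain ⟨rfl, rfl, rfl⟩ := meander_inj r q L M j k x y hj hk hx hy (by omega)
      rw [zZ_self]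
      exact morse_eq r q hr σ hσ _ L j k hj hk hs rfl
    · obtain ⟨rfl, rfl, rfl⟩ := meander_inj r q L0 M j0 k0 x y hj0 hk0 hx hy (by omega)
      rw [(mor_step r q L0 L j0 k0 j k _ (by omega) (by omega) (by omega) (by omega)
        (by omega) (by omega) (by omega) (by omega) (by omega) hp hst).1,
        morse_eq r q hr σ hσ _ L0 j0 k0 hj0 hk0 hs0 rfl,
        morse_eq r q hr σ hσ _ L j k hj hk hs (by omega)]
    · have n1 : ¬ (L = M ∧ j = x ∧ k = y) := by rintro ⟨rfl, rfl, rfl⟩; omega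
      have n0 : ¬ (L0 = M ∧ j0 = x ∧ k0 = y) := by rintro ⟨rfl, rfl, rfl⟩; omega
      have h := z_step r q L0 L M j0 k0 j k x y _ (by omega) (by omega) (by omega) (by omega)
        (by omega) (by omega) (by omega) (by omega) (by omega) (by omega) (by omega) (by omega)
        (by omega) (by omega) (by simpa using hsM) hp hst
      rw [← axis_lt r q L M j k x y hj hk hx hy, ← axis_lt r q M L x y j k hx hy hj hk,
        ← axis_lt r q L0 M j0 k0 x y hj0 hk0 hx hy, ← axis_lt r q M L0 x y j0 k0 hx hy hj0 hk0] at h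
      obtain ⟨h1, h2, h3, h4⟩ := h
      rw [ih (m+1) (by omega) L0 j0 k0 hj0 hk0 hs0 hm0, ← hm, ← hm0,
        symm_meander r q σ hσ L j k hj hk hs, symm_meander r q σ hσ L0 j0 k0 hj0 hk0 hs0,
        symm_meander r q σ hσ M x y hx hy hsM]
      generalize (-1:ℤ)^(meanderPos r q L j k) = e at h3 h4 hp ⊢
      rcases axis_tri r q L M j k x y hj hk hx hy n1 with t | t <;>
      rcases axis_tri r q L0 M j0 k0 x y hj0 hk0 hx hy n0 with t0 | t0
      · rw [sign_lt t, sign_lt t0, h2 t0 t]; simp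
      · rw [sign_lt t, sign_gt t0, h3 t0 t]; omega
      · rw [sign_gt t, sign_lt t0, h4 t0 t]; omega
      · rw [sign_gt t, sign_gt t0, h1 t0 t]; simp

lemma edge_iff (r q : ℕ) (hr : 1 ≤ r) (hq : 1 ≤ q) (σ : Equiv.Perm ℕ) (hσ : SigmaRQ r q σ)
    (L M : Tag) (j k x y : ℕ) (hj : j ≤ r) (hk : k ≤ q) (hx : x ≤ r) (hy : y ≤ q)
    (hsL : ¬ (L = Tag.A ∧ j = 0 ∧ k = 0)) (hsM : ¬ (M = Tag.A ∧ x = 0 ∧ y = 0)) :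
    hasEdge (2*(r+1)*(q+1)-1) σ (σ (axisPos r q L j k)) (σ (axisPos r q M x y)) ↔
      edgeL L j k M x y := by
  rw [sigma_axis r q σ hσ L j k hj hk hsL, sigma_axis r q σ hσ M x y hx hy hsM]
  have b1 := meander_bound r q L j k hj hk
  have b2 := meander_bound r q M x y hx hy
  have p1 := meander_ne_zero r q L j k hj hk hsL
  have p2 := meander_ne_zero r q M x y hx hy hsM
  have hz : ∀ (L M : Tag) (j k x y : ℕ), j ≤ r → k ≤ q → x ≤ r → y ≤ q →
      ¬ (L = Tag.A ∧ j = 0 ∧ k = 0) → ¬ (M = Tag.A ∧ x = 0 ∧ y = 0) →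
      zfun σ (meanderPos r q L j k) (meanderPos r q M x y) = zZ L j k M x y :=
    fun L M j k x y a1 a2 a3 a4 a5 a6 =>
      zrec_eq r q hr hq σ hσ M x y a3 a4 a6 _ L j k a1 a2 a5 rfl
  unfold hasEdge
  rw [morse_eq r q hr σ hσ _ L j k hj hk hsL rfl, morse_eq r q hr σ hσ _ M x y hx hy hsM rfl,
    hz L M j k x y hj hk hx hy hsL hsM]
  constructor
  · rintro ⟨-, -, -, -, hm, hw⟩
    by_contra hne
    obtain ⟨u, v, hu0, hu, hv0, hv, hb, h1, h2⟩ := nonedge_blocked r q L M j k x y (by omega)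
      (by omega) (by omega) (by omega) (by omega) (by omega) (by omega) (by omega) hm hne
    lift u to ℕ using hu0
    lift v to ℕ using hv0
    have hu' : u ≤ r := by omega
    have hv' : v ≤ q := by omega
    apply hw
    refine ⟨meanderPos r q Tag.B u v, ?_⟩
    rw [hz L Tag.B j k u v hj hk hu' hv' hsL (by simp), hz Tag.B M u v x y hu' hv' hx hy (by simp) hsM]
    rw [← meander_lt r q L Tag.B j k u v hj hk hu' hv', ← meander_lt r q M Tag.B x y u v hx hy hu' hv',
      ← meander_lt r q Tag.B L u v j k hu' hv' hj hk, ← meander_lt r q Tag.B M u v x y hu' hv' hx hy] at hb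
    exact ⟨by omega, by omega, h1, h2⟩
  · intro he
    refine ⟨by omega, by omega, by omega, by omega, edgeL_mor _ _ _ _ _ _ he, ?_⟩
    rintro ⟨w, hw1, hw2, h1, h2⟩
    obtain ⟨C, u, v, hu, hv, rfl⟩ := meander_surj r q w (by omega)
    have hsC : ¬ (C = Tag.A ∧ u = 0 ∧ v = 0) := by
      rintro ⟨rfl, rfl, rfl⟩
      rw [meander_star] at hw1; omega
    rw [hz L C j k u v hj hk hu hv hsL hsC, hz C M u v x y hu hv hx hy hsC hsM] at h1
    rw [hz C M u v x y hu hv hx hy hsC hsM] at h2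
    refine edge_unblocked r q L M C j k x y u v (by omega) (by omega) (by omega) (by omega)
      (by omega) (by omega) (by omega) (by omega) (by omega) (by omega) (by omega) (by omega)
      he ?_ h1 h2
    rw [← meander_lt r q L C j k u v hj hk hu hv, ← meander_lt r q M C x y u v hx hy hu hv,
      ← meander_lt r q C L u v j k hu hv hj hk, ← meander_lt r q C M u v x y hu hv hx hy]
    omega

/-- the index-swapping label map `Λ` is a direction-preserving
isomorphism between the connection digraphs of `σ_{rq}` and `σ_{qr}`. -/
theorem stmt_12 (r q : ℕ) (hr : 1 ≤ r) (hq : 1 ≤ q) (hrq : 1 < r*q)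
    (σ σ' : Equiv.Perm ℕ) (hσ : SigmaRQ r q σ) (hσ' : SigmaRQ q r σ') :
    ∀ (L L' : Tag) (j k j' k' : ℕ), j ≤ r → k ≤ q → j' ≤ r → k' ≤ q →
      ¬(L = Tag.A ∧ j = 0 ∧ k = 0) → ¬(L' = Tag.A ∧ j' = 0 ∧ k' = 0) →
      (hasEdge (2*(r+1)*(q+1)-1) σ
          (σ (axisPos r q L j k)) (σ (axisPos r q L' j' k')) ↔
        hasEdge (2*(r+1)*(q+1)-1) σ'
          (σ' (axisPos q r L k j)) (σ' (axisPos q r L' k' j'))) := by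
  intro L L' j k j' k' hj hk hj' hk' hs hs'
  rw [edge_iff r q hr hq σ hσ L L' j k j' k' hj hk hj' hk' hs hs']
  have hN : 2*(r+1)*(q+1)-1 = 2*(q+1)*(r+1)-1 := by congr 1; ring
  rw [hN, edge_iff q r hq hr σ' hσ' L L' k j k' j' hk hj hk' hj'
    (fun h => hs ⟨h.1, h.2.2, h.2.1⟩) (fun h => hs' ⟨h.1, h.2.2, h.2.1⟩)]
  exact edgeL_swap L L' j k j' k'
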